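/- arXiv:1603.04246 — 2 statements merged into one kernel-verified Lean document; each statement's English description precedes it below -/
import Mathlib

section
/- The function b: ℝ⁸ → ℂ defined below is a Schwartz function and is a −1-eigenfunction of the Fourier transform: b̂(x) = −b(x) for all x ∈ ℝ⁸. -/
open MeasureTheory FourierTransform

/-- The theta constant `θ00`. -/
noncomputable def theta00 (z : ℂ) : ℂ :=
  ∑' n : ℤ, Complex.exp ((Real.pi : ℂ) * Complex.I * (n : ℂ) ^ 2 * z)

/-- The theta constant `θ01`. -/
noncomputable def theta01 (z : ℂ) : ℂ :=
  ∑' n : ℤ, (-1 : ℂ) ^ n * Complex.exp ((Real.pi : ℂ) * Complex.I * (n : ℂ) ^ 2 * z)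

/-- The theta constant `θ10`. -/
noncomputable def theta10 (z : ℂ) : ℂ :=
  ∑' n : ℤ, Complex.exp ((Real.pi : ℂ) * Complex.I * ((n : ℂ) + 1/2) ^ 2 * z)

/-- `ψ_I = 128(θ00⁴+θ01⁴)/θ10⁸ + 128(θ01⁴−θ10⁴)/θ00⁸`. -/
noncomputable def psiI (z : ℂ) : ℂ :=
  128 * (theta00 z ^ 4 + theta01 z ^ 4) / theta10 z ^ 8 +
    128 * (theta01 z ^ 4 - theta10 z ^ 4) / theta00 z ^ 8

/-- `ψ_T = 128(θ00⁴+θ01⁴)/θ10⁸ + 128(θ00⁴+θ10⁴)/θ01⁸`. -/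
noncomputable def psiT (z : ℂ) : ℂ :=
  128 * (theta00 z ^ 4 + theta01 z ^ 4) / theta10 z ^ 8 +
    128 * (theta00 z ^ 4 + theta10 z ^ 4) / theta01 z ^ 8

/-- `ψ_S = −128(θ00⁴+θ10⁴)/θ01⁸ − 128(θ10⁴−θ01⁴)/θ00⁸`. -/
noncomputable def psiS (z : ℂ) : ℂ :=
  -128 * (theta00 z ^ 4 + theta10 z ^ 4) / theta01 z ^ 8 -
    128 * (theta10 z ^ 4 - theta01 z ^ 4) / theta00 z ^ 8
/-- Contour integral of `F` along the straight-line segment from `z₁` to `z₂`. -/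
noncomputable def segInt (z₁ z₂ : ℂ) (F : ℂ → ℂ) : ℂ :=
  (z₂ - z₁) * ∫ t in (0:ℝ)..1, F (z₁ + (t : ℂ) * (z₂ - z₁))

/-- Contour integral of `F` along the vertical ray from `c·i` to `i∞`. -/
noncomputable def rayIntFrom (c : ℝ) (F : ℂ → ℂ) : ℂ :=
  Complex.I * ∫ t in Set.Ioi c, F (Complex.I * (t : ℂ))
/-- The radial profile of the `−1`-eigenfunction `b`: the value of `b` on vectors of norm `r`. -/
noncomputable def bRad (r : ℝ) : ℂ :=
  segInt (-1) Complex.I (fun z => psiT z * Complex.exp ((Real.pi:ℂ) * Complex.I * (r:ℂ)^2 * z))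
    + segInt 1 Complex.I (fun z => psiT z * Complex.exp ((Real.pi:ℂ) * Complex.I * (r:ℂ)^2 * z))
    - 2 * segInt 0 Complex.I (fun z => psiI z * Complex.exp ((Real.pi:ℂ) * Complex.I * (r:ℂ)^2 * z))
    - 2 * rayIntFrom 1 (fun z => psiS z * Complex.exp ((Real.pi:ℂ) * Complex.I * (r:ℂ)^2 * z))

/-- The radial function `b : ℝ⁸ → ℂ`. -/
noncomputable def bFn (x : EuclideanSpace ℝ (Fin 8)) : ℂ := bRad ‖x‖


section thetaFacts
open Complex

lemma th00_eq (z : ℂ) : theta00 z = jacobiTheta₂ 0 z := by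
  simp [theta00, jacobiTheta₂, jacobiTheta₂_term]

lemma th01_eq (z : ℂ) : theta01 z = jacobiTheta₂ (1/2) z := by
  unfold theta01 jacobiTheta₂ jacobiTheta₂_term
  refine tsum_congr fun n => ?_
  rw [Complex.exp_add]
  congr 1
  rw [← Complex.exp_pi_mul_I, ← Complex.exp_int_mul]
  congr 1; ring

lemma th10_eq (z : ℂ) : theta10 z = cexp (Real.pi * I * z / 4) * jacobiTheta₂ (z/2) z := by
  unfold theta10 jacobiTheta₂ jacobiTheta₂_term
  rw [← tsum_mul_left]
  refine tsum_congr fun n => ?_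
  rw [← Complex.exp_add]
  congr 1; ring

lemma th00_T (z : ℂ) : theta00 (z + 1) = theta01 z := by
  unfold theta00 theta01
  refine tsum_congr fun n => ?_
  rw [mul_add, Complex.exp_add, mul_comm]
  congr 1
  rw [← Complex.exp_pi_mul_I, ← Complex.exp_int_mul, Complex.exp_eq_exp_iff_exists_int]
  obtain ⟨k, hk⟩ := Int.even_mul_pred_self n
  refine ⟨k, ?_⟩
  have : (n : ℂ) * (n - 1) = k + k := by exact_mod_cast hk
  linear_combination (Real.pi * I) * this

lemma th01_T (z : ℂ) : theta01 (z + 1) = theta00 z := by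
  rw [← th00_T, th00_eq, th00_eq, add_assoc, show (1:ℂ) + 1 = 2 by norm_num, jacobiTheta₂_add_right]

lemma th10_T (z : ℂ) : theta10 (z + 1) ^ 4 = - theta10 z ^ 4 := by
  have : theta10 (z + 1) = cexp (Real.pi * I / 4) * theta10 z := by
    unfold theta10
    rw [← tsum_mul_left]
    refine tsum_congr fun n => ?_
    rw [← Complex.exp_add, Complex.exp_eq_exp_iff_exists_int]
    obtain ⟨k, hk⟩ := Int.even_mul_succ_self n
    refine ⟨k, ?_⟩
    have : (n : ℂ) * (n + 1) = k + k := by exact_mod_cast hk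
    linear_combination (Real.pi * I) * this
  rw [this, mul_pow, ← Complex.exp_nat_mul]
  rw [show ((4:ℕ):ℂ) * (Real.pi * I / 4) = Real.pi * I by push_cast; ring, Complex.exp_pi_mul_I]
  ring

lemma aux_pow (z : ℂ) : ((-I * z) ^ (1 / 2 : ℂ)) ^ 4 = - z ^ 2 := by
  rw [show (1/2 : ℂ) = ((2:ℕ) : ℂ)⁻¹ by norm_num, show 4 = 2 * 2 by norm_num, pow_mul,
    Complex.cpow_nat_inv_pow _ two_ne_zero, mul_pow, neg_sq, I_sq]
  ring

lemma aux_feq (w z : ℂ) (hz : z ≠ 0) : jacobiTheta₂ (w / z) (-1 / z) ^ 4 * cexp (-Real.pi * I * w^2 / z) ^ 4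
    = - z ^ 2 * jacobiTheta₂ w z ^ 4 := by
  have h := jacobiTheta₂_functional_equation w z
  have h2 : z ^ 2 ≠ 0 := pow_ne_zero _ hz
  rw [h, mul_pow, mul_pow, div_pow, aux_pow]
  field_simp

lemma th00_S (z : ℂ) (hz : z ≠ 0) : theta00 (-1 / z) ^ 4 = - z ^ 2 * theta00 z ^ 4 := by
  have := aux_feq 0 z hz
  simpa [th00_eq] using this

lemma th01_S (z : ℂ) (hz : z ≠ 0) : theta01 (-1 / z) ^ 4 = - z ^ 2 * theta10 z ^ 4 := by
  have := aux_feq (z / 2) z hz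
  rw [th10_eq, th01_eq, mul_pow]
  rw [show z / 2 / z = 1/2 by field_simp] at this
  rw [show -(Real.pi:ℂ) * I * (z/2)^2 / z = - (Real.pi * I * z / 4) by field_simp; ring] at this
  rw [Complex.exp_neg] at this
  have hne := Complex.exp_ne_zero (Real.pi * I * z / 4)
  rw [inv_pow, ← div_eq_mul_inv, div_eq_iff (pow_ne_zero _ hne)] at this
  rw [this]; ring

lemma th10_S (z : ℂ) (hz : z ≠ 0) : theta10 (-1 / z) ^ 4 = - z ^ 2 * theta01 z ^ 4 := by
  have := th01_S (-1 / z) (by simpa using hz)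
  rw [show -1 / (-1 / z) = z by field_simp] at this
  rw [this]
  field_simp

lemma neg_inv_im (z : ℂ) : (-1 / z).im = z.im / normSq z := by
  simp [neg_div]

lemma psiI_add_one (z : ℂ) : psiI (z + 1) = psiT z := by
  unfold psiI psiT
  have h8 : theta10 (z+1) ^ 8 = theta10 z ^ 8 := by
    have := th10_T z
    calc _ = (theta10 (z+1) ^ 4)^2 := by ring
      _ = _ := by rw [this]; ring
  rw [h8, th10_T, th00_T, th01_T]
  ring

lemma psiT_add_one (z : ℂ) : psiT (z + 1) = psiI z := by
  unfold psiI psiT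
  have h8 : theta10 (z+1) ^ 8 = theta10 z ^ 8 := by
    have := th10_T z
    calc _ = (theta10 (z+1) ^ 4)^2 := by ring
      _ = _ := by rw [this]; ring
  rw [h8, th10_T, th00_T, th01_T]
  ring

lemma pow8 (a : ℂ) : a ^ 8 = (a ^ 4) ^ 2 := by ring

lemma psiT_S (z : ℂ) (hz : z ≠ 0) : psiT (-1 / z) * z ^ 2 = - psiT z := by
  unfold psiT
  simp only [pow8, th00_S z hz, th01_S z hz, th10_S z hz]
  by_cases h1 : theta01 z = 0 <;> by_cases h2 : theta10 z = 0 <;> simp [h1, h2] <;> field_simp <;> ring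

lemma psiI_S (z : ℂ) (hz : z ≠ 0) : psiI (-1 / z) * z ^ 2 = psiS z := by
  unfold psiI psiS
  simp only [pow8, th00_S z hz, th01_S z hz, th10_S z hz]
  by_cases h1 : theta01 z = 0 <;> by_cases h2 : theta00 z = 0 <;> simp [h1, h2] <;> field_simp <;> ring

lemma psiI_eq (z : ℂ) (hz : z ≠ 0) : psiI z = z ^ 2 * psiS (-1 / z) := by
  rw [← psiI_S (-1/z) (by simpa using hz), show -1 / (-1 / z) = z by field_simp]
  field_simp

-- nonvanishing
lemma norm_theta00_sub_one {z : ℂ} (hz : 0 < z.im) :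
    ‖theta00 z - 1‖ ≤ 2 / (1 - Real.exp (-Real.pi * z.im)) * Real.exp (-Real.pi * z.im) :=
  norm_jacobiTheta_sub_one_le hz

lemma norm_theta01_sub_one {z : ℂ} (hz : 0 < z.im) :
    ‖theta01 z - 1‖ ≤ 2 / (1 - Real.exp (-Real.pi * z.im)) * Real.exp (-Real.pi * z.im) := by
  rw [← th00_T]
  have := norm_theta00_sub_one (z := z + 1) (by simpa using hz)
  simpa using this

lemma exp_small {y : ℝ} (hy : 1 / 2 ≤ y) : Real.exp (-Real.pi * y) ≤ 1 / 4 := by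
  have h1 : (3/2 : ℝ) ≤ Real.pi * y := by nlinarith [Real.pi_gt_three]
  have h2 : Real.exp (-Real.pi * y) ≤ Real.exp (-(3/2)) := Real.exp_le_exp.2 (by linarith)
  have h3 : (4:ℝ) ≤ Real.exp (3/2) := by
    have h4 : Real.exp (3/2) ^ 2 = Real.exp 1 ^ 3 := by
      rw [← Real.exp_nat_mul, ← Real.exp_nat_mul]; norm_num
    have h5 : (2.7:ℝ)^3 ≤ Real.exp 1 ^ 3 := by
      gcongr; linarith [Real.exp_one_gt_d9]
    nlinarith [Real.exp_pos (3/2)]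
  rw [Real.exp_neg] at h2
  refine h2.trans ?_
  rw [inv_le_comm₀ (by positivity) (by norm_num)]
  linarith

lemma theta_aux {y : ℝ} (hy : 1 / 2 ≤ y) :
    2 / (1 - Real.exp (-Real.pi * y)) * Real.exp (-Real.pi * y) ≤ 8 / 3 * Real.exp (-Real.pi * y) := by
  have h := exp_small hy
  refine mul_le_mul_of_nonneg_right ?_ (Real.exp_pos _).le
  rw [div_le_iff₀ (by linarith)]
  linarith

lemma th00_bd {z : ℂ} (hz : 1 / 2 ≤ z.im) :
    ‖theta00 z - 1‖ ≤ 8 / 3 * Real.exp (-Real.pi * z.im) :=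
  (norm_theta00_sub_one (by linarith)).trans (theta_aux hz)

lemma th01_bd {z : ℂ} (hz : 1 / 2 ≤ z.im) :
    ‖theta01 z - 1‖ ≤ 8 / 3 * Real.exp (-Real.pi * z.im) :=
  (norm_theta01_sub_one (by linarith)).trans (theta_aux hz)

lemma th10_bd {z : ℂ} (hz : 1 / 2 ≤ z.im) :
    ∃ w : ℂ, theta10 z = 2 * cexp (Real.pi * I * z / 4) * w ∧ ‖w - 1‖ ≤ 1 / 3 := by
  have hz0 : 0 < z.im := by linarith
  set f : ℤ → ℂ := fun n => cexp (Real.pi * I * ((n : ℂ) + 1/2) ^ 2 * z) with hf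
  have hsum : Summable f := by
    have h := ((summable_jacobiTheta₂_term_iff (z/2) z).2 hz0).mul_left (cexp (Real.pi * I * z / 4))
    refine h.congr fun n => ?_
    simp only [hf, jacobiTheta₂_term]
    rw [← Complex.exp_add]
    congr 1; ring
  have hinjS : Summable fun n : ℕ => f n :=
    hsum.comp_injective (i := fun n : ℕ => (n : ℤ)) Nat.cast_injective
  have hneg : ∀ n : ℕ, f (-(n + 1)) = f n := by
    intro n
    simp only [hf]; congr 1; push_cast; ring
  have h2 : theta10 z = 2 * ∑' n : ℕ, f n := by
    have : theta10 z = ∑' n : ℤ, f n := rfl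
    rw [this, tsum_of_nat_of_neg_add_one hinjS (by simpa only [hneg] using hinjS)]
    simp only [hneg]; ring
  have hfac : ∀ n : ℕ, f n = cexp (Real.pi * I * z / 4) * cexp (Real.pi * I * ((n:ℂ) * (n + 1)) * z) := by
    intro n
    simp only [hf]; rw [← Complex.exp_add]; congr 1; push_cast; ring
  have hg : Summable fun n : ℕ => cexp (Real.pi * I * ((n:ℂ) * (n + 1)) * z) := by
    simp only [hfac] at hinjS
    exact (summable_mul_left_iff (Complex.exp_ne_zero _)).1 hinjS
  refine ⟨∑' n : ℕ, cexp (Real.pi * I * ((n:ℂ) * (n + 1)) * z), ?_, ?_⟩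
  · rw [h2, tsum_congr hfac, tsum_mul_left]; ring
  · rw [hg.tsum_eq_zero_add]
    simp only [Nat.cast_zero, zero_mul, mul_zero, Complex.exp_zero, add_sub_cancel_left]
    have hE := exp_small hz
    set E := Real.exp (-Real.pi * z.im) with hEd
    have hE0 : 0 < E := Real.exp_pos _
    have hgeo : HasSum (fun n : ℕ => E * E ^ n) (E * (1 - E)⁻¹) :=
      (hasSum_geometric_of_lt_one hE0.le (by linarith)).mul_left _
    refine (tsum_of_norm_bounded hgeo ?_).trans ?_
    · intro n
      rw [Complex.norm_exp, ← pow_succ', hEd, ← Real.exp_nat_mul]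
      refine Real.exp_le_exp.2 ?_
      have : (Real.pi * I * (((n+1:ℕ):ℂ) * ((n+1:ℕ) + 1)) * z).re
          = -(Real.pi * ((n + 1) * (n + 2)) * z.im) := by
        have : (Real.pi * I * (((n+1:ℕ):ℂ) * ((n+1:ℕ) + 1)) * z)
          = ((Real.pi * ((n + 1) * (n + 2)) : ℝ) : ℂ) * (I * z) := by push_cast; ring
        rw [this, Complex.re_ofReal_mul]; simp
      rw [this]
      push_cast
      have : 0 ≤ Real.pi * z.im * ((n+1) * (n+1)) := by positivity
      nlinarith
    · rw [← div_eq_mul_inv, div_le_iff₀ (by linarith)]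
      linarith

lemma ne_zero_of_near {w : ℂ} {c : ℝ} (h : ‖w - 1‖ ≤ c) (hc : c < 1) : w ≠ 0 := by
  rintro rfl
  simp at h; linarith

lemma prod_ne_high {z : ℂ} (hz : 1 / 2 ≤ z.im) : theta00 z * theta01 z * theta10 z ≠ 0 := by
  have hE := exp_small hz
  obtain ⟨w, hw, hw1⟩ := th10_bd hz
  refine mul_ne_zero (mul_ne_zero (ne_zero_of_near (th00_bd hz) (by linarith))
    (ne_zero_of_near (th01_bd hz) (by linarith))) ?_
  rw [hw]
  exact mul_ne_zero (mul_ne_zero two_ne_zero (Complex.exp_ne_zero _)) (ne_zero_of_near hw1 (by norm_num))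

lemma prod_T (z : ℂ) : theta00 (z+1) * theta01 (z+1) * theta10 (z+1) ≠ 0 ↔
    theta00 z * theta01 z * theta10 z ≠ 0 := by
  have h : (theta00 (z+1) * theta01 (z+1) * theta10 (z+1)) ^ 4 =
     - (theta00 z * theta01 z * theta10 z)^4 := by
    rw [mul_pow, mul_pow, mul_pow, mul_pow, th00_T, th01_T, th10_T]; ring
  rw [← pow_ne_zero_iff (n := 4) (by norm_num), h, neg_ne_zero, pow_ne_zero_iff (by norm_num)]

lemma prod_S (z : ℂ) (hz : z ≠ 0) : theta00 (-1/z) * theta01 (-1/z) * theta10 (-1/z) ≠ 0 ↔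
    theta00 z * theta01 z * theta10 z ≠ 0 := by
  have h : (theta00 (-1/z) * theta01 (-1/z) * theta10 (-1/z)) ^ 4 =
     - z ^ 6 * (theta00 z * theta01 z * theta10 z)^4 := by
    rw [mul_pow, mul_pow, mul_pow, mul_pow, th00_S z hz, th01_S z hz, th10_S z hz]; ring
  rw [← pow_ne_zero_iff (n := 4) (by norm_num), h, mul_ne_zero_iff, pow_ne_zero_iff (by norm_num)]
  simp [hz]

lemma prod_SL (g : Matrix.SpecialLinearGroup (Fin 2) ℤ) : ∀ z : UpperHalfPlane,
    theta00 ↑(g • z) * theta01 ↑(g • z) * theta10 ↑(g • z) ≠ 0 ↔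
    theta00 z * theta01 z * theta10 z ≠ 0 := by
  have hg : g ∈ Subgroup.closure {ModularGroup.S, ModularGroup.T} := by
    simp [SpecialLinearGroup.SL2Z_generators]
  induction hg using Subgroup.closure_induction with
  | mem x hx =>
    intro z
    rcases hx with rfl | rfl
    · rw [UpperHalfPlane.modular_S_smul]
      have := prod_S z z.ne_zero
      have e : (-(z:ℂ))⁻¹ = -1 / (z:ℂ) := by rw [inv_neg, neg_div, one_div]
      change theta00 (-(z:ℂ))⁻¹ * theta01 (-(z:ℂ))⁻¹ * theta10 (-(z:ℂ))⁻¹ ≠ 0 ↔ _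
      rw [e]; exact this
    · rw [UpperHalfPlane.modular_T_smul]
      have := prod_T z
      simpa [add_comm] using this
  | one => intro z; simp
  | mul x y _ _ hx hy => intro z; rw [mul_smul, hx, hy]
  | inv x _ hx => intro z; rw [← hx (x⁻¹ • z), smul_inv_smul]

lemma prod_ne {z : ℂ} (hz : 0 < z.im) : theta00 z * theta01 z * theta10 z ≠ 0 := by
  obtain ⟨g, hg⟩ := ModularGroup.exists_smul_mem_fd ⟨z, hz⟩
  have h := ModularGroup.three_le_four_mul_im_sq_of_mem_fd hg
  refine (prod_SL g ⟨z, hz⟩).1 (prod_ne_high ?_)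
  have h0 := (g • (⟨z, hz⟩ : UpperHalfPlane)).im_pos
  change 1 / 2 ≤ (g • (⟨z, hz⟩ : UpperHalfPlane)).im
  nlinarith

lemma th00_ne {z : ℂ} (hz : 0 < z.im) : theta00 z ≠ 0 := fun h => prod_ne hz (by simp [h])
lemma th01_ne {z : ℂ} (hz : 0 < z.im) : theta01 z ≠ 0 := fun h => prod_ne hz (by simp [h])
lemma th10_ne {z : ℂ} (hz : 0 < z.im) : theta10 z ≠ 0 := fun h => prod_ne hz (by simp [h])

lemma th00_diff {z : ℂ} (hz : 0 < z.im) : DifferentiableAt ℂ theta00 z := by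
  rw [show theta00 = fun z => jacobiTheta₂ 0 z from funext th00_eq]
  exact differentiableAt_jacobiTheta₂_snd 0 hz
lemma th01_diff {z : ℂ} (hz : 0 < z.im) : DifferentiableAt ℂ theta01 z := by
  rw [show theta01 = fun z => jacobiTheta₂ (1/2) z from funext th01_eq]
  exact differentiableAt_jacobiTheta₂_snd (1/2) hz
lemma th10_diff {z : ℂ} (hz : 0 < z.im) : DifferentiableAt ℂ theta10 z := by
  rw [show theta10 = fun z => cexp (Real.pi * I * z / 4) * jacobiTheta₂ (z/2) z from funext th10_eq]
  have h1 := (hasFDerivAt_jacobiTheta₂ (z/2) hz).differentiableAt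
  have h2 : DifferentiableAt ℂ (fun z : ℂ => (z/2, z)) z := by fun_prop
  have h3 : DifferentiableAt ℂ (fun z => jacobiTheta₂ (z/2) z) z :=
    DifferentiableAt.comp (f := fun z : ℂ => (z/2, z)) z h1 h2
  exact DifferentiableAt.mul (by fun_prop) h3

lemma psiI_diff {z : ℂ} (hz : 0 < z.im) : DifferentiableAt ℂ psiI z := by
  have h0 := th00_diff hz
  have h1 := th01_diff hz
  have h2 := th10_diff hz
  have n0 := pow_ne_zero 8 (th00_ne hz)
  have n2 := pow_ne_zero 8 (th10_ne hz)
  unfold psiI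
  exact ((((h0.pow 4).add (h1.pow 4)).const_mul 128).div (h2.pow 8) n2).add
    ((((h1.pow 4).sub (h2.pow 4)).const_mul 128).div (h0.pow 8) n0)

lemma psiT_diff {z : ℂ} (hz : 0 < z.im) : DifferentiableAt ℂ psiT z := by
  rw [show psiT = fun z => psiI (z + 1) from funext fun z => (psiI_add_one z).symm]
  exact DifferentiableAt.comp (g := psiI) (f := fun z => z + 1) z (psiI_diff (by simpa using hz)) (by fun_prop)

lemma psiS_diff {z : ℂ} (hz : 0 < z.im) : DifferentiableAt ℂ psiS z := by
  have h0 := th00_diff hz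
  have h1 := th01_diff hz
  have h2 := th10_diff hz
  have n0 := pow_ne_zero 8 (th00_ne hz)
  have n1 := pow_ne_zero 8 (th01_ne hz)
  unfold psiS
  exact ((((h0.pow 4).add (h2.pow 4)).const_mul (-128)).div (h1.pow 8) n1).sub
    ((((h2.pow 4).sub (h1.pow 4)).const_mul 128).div (h0.pow 8) n0)

lemma pow4_bd {a : ℂ} {E : ℝ} (h : ‖a - 1‖ ≤ 8 / 3 * E) (hE : E ≤ 1 / 4) :
    ‖a ^ 4 - 1‖ ≤ 32 * E ∧ ‖a ^ 4‖ ≤ 9 ∧ 1 / 81 ≤ ‖a ^ 4‖ := by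
  have hn : ‖a‖ ≤ 5 / 3 := by
    have := norm_le_norm_add_norm_sub' a 1
    simp at this; linarith
  have hn' : 1 / 3 ≤ ‖a‖ := by
    have := norm_sub_norm_le (1:ℂ) a
    rw [norm_sub_rev] at this; simp at this; linarith
  have h0 := norm_nonneg a
  have h1 := norm_nonneg (a - 1)
  refine ⟨?_, ?_, ?_⟩
  · have e : a ^ 4 - 1 = (a - 1) * ((a + 1) * (a ^ 2 + 1)) := by ring
    have h2 : ‖a + 1‖ ≤ 8 / 3 := (norm_add_le _ _).trans (by simp; linarith)
    have h3 : ‖a ^ 2 + 1‖ ≤ 34 / 9 := (norm_add_le _ _).trans (by simp; nlinarith)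
    rw [e, norm_mul, norm_mul]
    have h4 : ‖a + 1‖ * ‖a ^ 2 + 1‖ ≤ 8/3 * (34/9) := by gcongr
    calc _ ≤ 8 / 3 * E * (8/3 * (34/9)) := by gcongr; linarith
      _ ≤ _ := by nlinarith
  · rw [norm_pow]
    calc _ ≤ (5/3:ℝ)^4 := by gcongr
      _ ≤ _ := by norm_num
  · rw [norm_pow]
    calc _ = (1/3:ℝ)^4 := by norm_num
      _ ≤ _ := by gcongr

lemma psiS_bd : ∃ K : ℝ, 0 < K ∧ ∀ z : ℂ, 1 / 2 ≤ z.im → ‖psiS z‖ ≤ K * Real.exp (-Real.pi * z.im) := by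
  refine ⟨128 * (64 * 243 + 64 * 162) * 81 ^ 4, by norm_num, fun z hz => ?_⟩
  have hE := exp_small hz
  have hz0 : 0 < z.im := by linarith
  obtain ⟨a1, a2, a3⟩ := pow4_bd (th00_bd hz) hE
  obtain ⟨b1, b2, b3⟩ := pow4_bd (th01_bd hz) hE
  have c1 : ‖theta10 z ^ 4‖ ≤ 64 * Real.exp (-Real.pi * z.im) := by
    obtain ⟨w, hw, hw1⟩ := th10_bd hz
    have hwn : ‖w‖ ≤ 4 / 3 := by
      have := norm_le_norm_add_norm_sub' w 1
      simp at this; linarith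
    have he : ‖cexp (Real.pi * I * z / 4)‖ ^ 4 = Real.exp (-Real.pi * z.im) := by
      rw [← norm_pow, ← Complex.exp_nat_mul, Complex.norm_exp]
      congr 1
      have : ((4:ℕ):ℂ) * (Real.pi * I * z / 4) = (Real.pi : ℂ) * (I * z) := by push_cast; ring
      rw [this, Complex.re_ofReal_mul]; simp
    rw [hw, norm_pow, norm_mul, norm_mul, mul_pow, mul_pow, he]
    have : ‖w‖ ^ 4 ≤ (4/3:ℝ)^4 := by gcongr
    have h16 : ‖(2:ℂ)‖ ^ 4 = 16 := by norm_num
    rw [h16]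
    nlinarith [Real.exp_pos (-Real.pi * z.im)]
  have n0 := pow_ne_zero 4 (th00_ne hz0)
  have n1 := pow_ne_zero 4 (th01_ne hz0)
  set A := theta00 z ^ 4
  set B := theta01 z ^ 4
  set C := theta10 z ^ 4
  set E := Real.exp (-Real.pi * z.im)
  have hE0 : 0 < E := Real.exp_pos _
  have e : psiS z = -128 * ((A - B) * (A^2 + A * B + B^2) + C * (A^2+B^2)) / (A^2 * B^2) := by
    unfold psiS
    simp only [pow8]
    change -128 * (A + C) / B ^ 2 - 128 * (C - B) / A ^ 2 = _
    field_simp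
    ring
  clear_value A B C E
  have hAB : ‖A - B‖ ≤ 64 * E := by
    have : A - B = (A - 1) - (B - 1) := by ring
    rw [this]; exact (norm_sub_le _ _).trans (by linarith)
  have hA0 := norm_nonneg A
  have hB0 := norm_nonneg B
  have h1 : ‖A^2 + A * B + B^2‖ ≤ 243 := by
    refine (norm_add₃_le).trans ?_
    rw [norm_pow, norm_mul, norm_pow]; nlinarith
  have h2 : ‖A^2 + B^2‖ ≤ 162 := by
    refine (norm_add_le _ _).trans ?_
    rw [norm_pow, norm_pow]; nlinarith
  have h3 : ‖(A - B) * (A^2 + A * B + B^2) + C * (A^2+B^2)‖ ≤ (64 * 243 + 64 * 162) * E := by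
    refine (norm_add_le _ _).trans ?_
    rw [norm_mul, norm_mul]
    have := mul_le_mul hAB h1 (norm_nonneg _) (by positivity)
    have := mul_le_mul c1 h2 (norm_nonneg _) (by positivity)
    linarith
  have h4 : (1/81 : ℝ)^4 ≤ ‖A^2 * B^2‖ := by
    rw [norm_mul, norm_pow, norm_pow]
    calc (1/81 : ℝ)^4 = (1/81)^2 * (1/81)^2 := by norm_num
      _ ≤ _ := by gcongr
  rw [e, norm_div, norm_mul, div_le_iff₀ (by positivity)]
  have h5 : ‖(-128 : ℂ)‖ = 128 := by norm_num
  rw [h5]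
  calc _ ≤ 128 * ((64 * 243 + 64 * 162) * E) := by gcongr
    _ = 128 * (64 * 243 + 64 * 162) * 81 ^ 4 * E * (1/81)^4 := by ring
    _ ≤ _ := by gcongr

lemma psiI_bd : ∃ K : ℝ, 0 < K ∧ ∀ v : ℂ, 0 < v.im → normSq v ≤ 2 * v.im →
    ‖psiI v‖ ≤ K * Real.exp (-Real.pi * (v.im / normSq v)) := by
  obtain ⟨K, hK, h⟩ := psiS_bd
  refine ⟨4 * K, by positivity, fun v hv hv2 => ?_⟩
  have hv0 : v ≠ 0 := by rintro rfl; simp at hv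
  have hn : 0 < normSq v := normSq_pos.2 hv0
  have h1 := h (-1 / v) (by rw [neg_inv_im, le_div_iff₀ hn]; linarith)
  rw [neg_inv_im] at h1
  rw [psiI_eq v hv0, norm_mul, norm_pow, ← Complex.normSq_eq_norm_sq]
  have h4 : normSq v ≤ 4 := by
    have : v.im ^ 2 ≤ normSq v := by rw [normSq_apply]; nlinarith [mul_self_nonneg v.re]
    nlinarith
  rw [mul_assoc]
  gcongr

end thetaFacts


section general
open Complex Set

/-- data for a Gaussian superposition -/
structure GData (μ : Measure ℝ) (φ γ : ℝ → ℂ) : Prop where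
  mφ : AEStronglyMeasurable φ μ
  cγ : Continuous γ
  pos : ∀ᵐ t ∂μ, 0 < (γ t).im
  int : ∀ i M : ℕ, Integrable (fun t => ‖φ t‖ * (‖γ t‖ ^ i * ((γ t).im⁻¹) ^ M *
    Real.exp (Real.pi / 2 * (γ t).im))) μ

noncomputable def gInt (μ : Measure ℝ) (φ γ : ℝ → ℂ) (n : ℕ) (u : ℝ) : ℂ :=
  ∫ t, φ t * (Real.pi * I * γ t) ^ n * cexp (Real.pi * I * u * γ t) ∂μ

variable {μ : Measure ℝ} {φ γ : ℝ → ℂ}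

lemma norm_gexp (u : ℝ) (w : ℂ) : ‖cexp (Real.pi * I * u * w)‖ = Real.exp (-(Real.pi * u * w.im)) := by
  rw [Complex.norm_exp]
  congr 1
  have : (Real.pi * I * u * w) = ((Real.pi * u : ℝ) : ℂ) * (I * w) := by push_cast; ring
  rw [this, Complex.re_ofReal_mul]; simp

lemma GData.meas (h : GData μ φ γ) (n : ℕ) (u : ℝ) :
    AEStronglyMeasurable (fun t => φ t * (Real.pi * I * γ t) ^ n * cexp (Real.pi * I * u * γ t)) μ := by
  have := h.cγ
  exact (h.mφ.mul (Continuous.aestronglyMeasurable (by fun_prop))).mul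
    (Continuous.aestronglyMeasurable (by fun_prop))

lemma GData.norm_le (n : ℕ) {u : ℝ} (hu : -1/2 < u) {t : ℝ} (ht : 0 < (γ t).im) :
    ‖φ t * (Real.pi * I * γ t) ^ n * cexp (Real.pi * I * u * γ t)‖ ≤
     Real.pi ^ n * (‖φ t‖ * (‖γ t‖ ^ n * ((γ t).im⁻¹) ^ 0 * Real.exp (Real.pi / 2 * (γ t).im))) := by
  rw [norm_mul, norm_mul, norm_gexp, norm_pow, norm_mul, norm_mul, norm_I, norm_real,
    Real.norm_of_nonneg Real.pi_pos.le]
  have : Real.exp (-(Real.pi * u * (γ t).im)) ≤ Real.exp (Real.pi / 2 * (γ t).im) := by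
    refine Real.exp_le_exp.2 ?_
    have : 0 < Real.pi * (γ t).im := by positivity
    nlinarith
  calc _ ≤ ‖φ t‖ * (Real.pi * 1 * ‖γ t‖) ^ n * Real.exp (Real.pi / 2 * (γ t).im) := by gcongr
    _ = _ := by ring

lemma GData.integrable (h : GData μ φ γ) (n : ℕ) {u : ℝ} (hu : -1/2 < u) :
    Integrable (fun t => φ t * (Real.pi * I * γ t) ^ n * cexp (Real.pi * I * u * γ t)) μ := by
  refine ((h.int n 0).const_mul (Real.pi ^ n)).mono' (h.meas n u) ?_
  filter_upwards [h.pos] with t ht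
  exact GData.norm_le n hu ht

lemma GData.hasDerivAt (h : GData μ φ γ) (n : ℕ) {u : ℝ} (hu : -1/2 < u) :
    HasDerivAt (gInt μ φ γ n) (gInt μ φ γ (n+1) u) u := by
  refine (hasDerivAt_integral_of_dominated_loc_of_deriv_le (Ioi_mem_nhds hu)
    (Filter.Eventually.of_forall fun v => h.meas n v) (h.integrable n hu) (h.meas (n+1) u)
    (bound := fun t => Real.pi ^ (n+1) * (‖φ t‖ * (‖γ t‖ ^ (n+1) * ((γ t).im⁻¹) ^ 0 * Real.exp (Real.pi / 2 * (γ t).im))))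
    ?_ ((h.int (n+1) 0).const_mul _)
    (F' := fun u t => φ t * (Real.pi * I * γ t) ^ (n+1) * cexp (Real.pi * I * u * γ t)) ?_).2
  · filter_upwards [h.pos] with t ht v hv
    exact GData.norm_le (n+1) hv ht
  · refine Filter.Eventually.of_forall fun t v _ => ?_
    have h1 : HasDerivAt (fun v : ℝ => (Real.pi * I * (v:ℂ) * γ t)) (Real.pi * I * γ t) v := by
      have := ((Complex.ofRealCLM.hasDerivAt (x := v)).const_mul (Real.pi * I)).mul_const (γ t)
      simpa using this
    have := (h1.cexp).const_mul (φ t * (Real.pi * I * γ t) ^ n)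
    refine this.congr_deriv ?_
    ring

lemma GData.iter (h : GData μ φ γ) (n : ℕ) : ∀ u ∈ Ioi (-1/2 : ℝ),
    iteratedDerivWithin n (gInt μ φ γ 0) (Ioi (-1/2 : ℝ)) u = gInt μ φ γ n u := by
  induction n with
  | zero => intro u _; simp
  | succ n ih =>
    intro u hu
    rw [iteratedDerivWithin_succ, derivWithin_congr ih (ih u hu)]
    exact (h.hasDerivAt n hu).hasDerivWithinAt.derivWithin (uniqueDiffOn_Ioi _ u hu)

lemma GData.contDiffOn (h : GData μ φ γ) : ContDiffOn ℝ (⊤ : ℕ∞) (gInt μ φ γ 0) (Ioi (-1/2 : ℝ)) := by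
  refine contDiffOn_of_differentiableOn_deriv fun m _ => ?_
  refine DifferentiableOn.congr (f := gInt μ φ γ m) ?_ (h.iter m)
  intro u hu
  exact (h.hasDerivAt m hu).differentiableAt.differentiableWithinAt

lemma GData.decay (h : GData μ φ γ) (n M : ℕ) : ∃ C : ℝ, ∀ u : ℝ, 0 ≤ u →
    u ^ M * ‖gInt μ φ γ n u‖ ≤ C := by
  refine ⟨∫ t, M.factorial * Real.pi ^ n * (‖φ t‖ * (‖γ t‖ ^ n * ((γ t).im⁻¹) ^ M *
    Real.exp (Real.pi / 2 * (γ t).im))) ∂μ, fun u hu => ?_⟩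
  have hi := (h.int n M).const_mul (M.factorial * Real.pi ^ n : ℝ)
  have : u ^ M * ‖gInt μ φ γ n u‖ = ‖∫ t, (u ^ M : ℝ) • (φ t * (Real.pi * I * γ t) ^ n * cexp (Real.pi * I * u * γ t)) ∂μ‖ := by
    rw [integral_smul, norm_smul, Real.norm_of_nonneg (by positivity)]; rfl
  rw [this]
  refine norm_integral_le_of_norm_le hi ?_
  filter_upwards [h.pos] with t ht
  rw [norm_smul, Real.norm_of_nonneg (by positivity : 0 ≤ u ^ M), norm_mul, norm_mul, norm_gexp, norm_pow, norm_mul, norm_mul, norm_I, norm_real,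
    Real.norm_of_nonneg Real.pi_pos.le]
  have key : u ^ M * Real.exp (-(Real.pi * u * (γ t).im)) ≤ M.factorial * ((γ t).im⁻¹) ^ M := by
    have h1 : (u * (γ t).im) ^ M / M.factorial ≤ Real.exp (Real.pi * u * (γ t).im) := by
      refine (Real.pow_div_factorial_le_exp _ (by positivity) M).trans (Real.exp_le_exp.2 ?_)
      have : 0 ≤ u * (γ t).im := by positivity
      nlinarith [Real.pi_gt_three]
    rw [Real.exp_neg, ← div_eq_mul_inv, div_le_iff₀ (Real.exp_pos _)]
    calc u ^ M = M.factorial * ((γ t).im⁻¹) ^ M * ((u * (γ t).im) ^ M / M.factorial) := by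
          have : (M.factorial : ℝ) ≠ 0 := by positivity
          rw [inv_pow, mul_pow]
          field_simp
      _ ≤ _ := by gcongr
  have one : 1 ≤ Real.exp (Real.pi / 2 * (γ t).im) := Real.one_le_exp (by positivity)
  calc _ = (u ^ M * Real.exp (-(Real.pi * u * (γ t).im))) * (‖φ t‖ * (Real.pi * 1 * ‖γ t‖) ^ n) := by ring
    _ ≤ (M.factorial * ((γ t).im⁻¹) ^ M) * (‖φ t‖ * (Real.pi * 1 * ‖γ t‖) ^ n) * Real.exp (Real.pi / 2 * (γ t).im) := by
      refine le_trans (by gcongr) (le_mul_of_one_le_right (by positivity) one)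
    _ = _ := by ring

abbrev E8 := EuclideanSpace ℝ (Fin 8)

lemma pow_aux {r : ℝ} (hr : 0 ≤ r) (K : ℕ) : (1 + r) ^ K ≤ 2 ^ K * (1 + (r ^ 2) ^ K) := by
  rcases le_total r 1 with h | h
  · calc (1 + r) ^ K ≤ 2 ^ K := by gcongr; linarith
      _ ≤ _ := by
        have : 0 ≤ (r ^ 2) ^ K := by positivity
        have : (0:ℝ) < 2 ^ K := by positivity
        nlinarith
  · calc (1 + r) ^ K ≤ (2 * r ^ 2) ^ K := by gcongr; nlinarith
      _ = 2 ^ K * (r ^ 2) ^ K := by rw [mul_pow]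
      _ ≤ _ := by gcongr; linarith

lemma GData.decay' (h : GData μ φ γ) (n K : ℕ) : ∃ C : ℝ, ∀ i ≤ n, ∀ r : ℝ, 0 ≤ r →
    (1 + r) ^ K * ‖gInt μ φ γ i (r ^ 2)‖ ≤ C := by
  choose C hC using fun i M => h.decay i M
  refine ⟨∑ i ∈ Finset.range (n+1), 2 ^ K * (|C i 0| + |C i K|), fun i hi r hr => ?_⟩
  have h1 := hC i 0 (r^2) (by positivity)
  have h2 := hC i K (r^2) (by positivity)
  refine le_trans ?_ (Finset.single_le_sum (f := fun i => 2 ^ K * (|C i 0| + |C i K|))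
    (fun i _ => by positivity) (Finset.mem_range.2 (Nat.lt_succ_of_le hi)))
  calc _ ≤ (2 ^ K * (1 + (r ^ 2) ^ K)) * ‖gInt μ φ γ i (r ^ 2)‖ := by
        gcongr; exact pow_aux hr K
    _ = 2 ^ K * ((r^2) ^ 0 * ‖gInt μ φ γ i (r ^ 2)‖ + (r^2)^K * ‖gInt μ φ γ i (r ^ 2)‖) := by ring
    _ ≤ _ := by
      gcongr
      · exact h1.trans (le_abs_self _)
      · exact h2.trans (le_abs_self _)

lemma GData.schwartz (h : GData μ φ γ) : ∃ S : SchwartzMap E8 ℂ, ∀ x, S x =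
    ∫ t, φ t * cexp (Real.pi * I * (‖x‖ : ℂ) ^ 2 * γ t) ∂μ := by
  have hsq : Function.HasTemperateGrowth (fun x : E8 => ‖x‖ ^ 2) := Function.hasTemperateGrowth_norm_sq E8
  have hrange : range (fun x : E8 => ‖x‖ ^ 2) ⊆ Ioi (-1/2 : ℝ) := by
    rintro _ ⟨x, rfl⟩
    have : 0 ≤ ‖x‖ ^ 2 := by positivity
    simp only [mem_Ioi]; linarith
  refine ⟨⟨gInt μ φ γ 0 ∘ (fun x : E8 => ‖x‖ ^ 2), ?_, ?_⟩, fun x => ?_⟩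
  · rw [← contDiffOn_univ]
    exact h.contDiffOn.comp hsq.1.contDiffOn (fun x _ => hrange ⟨x, rfl⟩)
  · intro k n
    obtain ⟨l, C, hC, hD⟩ := hsq.norm_iteratedFDeriv_le_uniform n
    obtain ⟨C', hC'⟩ := h.decay' n (k + l * n)
    refine ⟨n.factorial * C' * (1 + C) ^ n, fun x => ?_⟩
    have h1 : (0:ℝ) < 1 + ‖x‖ := by positivity
    have := norm_iteratedFDeriv_comp_le' (n := n) hrange (uniqueDiffOn_Ioi _) h.contDiffOn hsq.1 (by exact_mod_cast le_top) x
      (C := C' / (1 + ‖x‖) ^ (k + l * n)) (D := (1 + C) * (1 + ‖x‖) ^ l) ?_ ?_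
    · calc _ ≤ (1 + ‖x‖) ^ k * (n.factorial * (C' / (1 + ‖x‖) ^ (k + l * n)) * ((1 + C) * (1 + ‖x‖) ^ l) ^ n) := by
            gcongr; linarith
        _ = _ := by
          rw [mul_pow, ← pow_mul, pow_add]
          field_simp
    · intro i hi
      rw [norm_iteratedFDerivWithin_eq_norm_iteratedDerivWithin, h.iter i _ (hrange ⟨x, rfl⟩),
        le_div_iff₀ (by positivity), mul_comm]
      exact hC' i hi _ (norm_nonneg _)
    · intro i hi1 hin
      refine (hD i hin x).trans ?_
      calc C * (1 + ‖x‖) ^ l ≤ (1 + C) * (1 + ‖x‖) ^ l := by gcongr; linarith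
        _ ≤ _ := by
          refine le_self_pow₀ ?_ (by omega)
          have : 1 ≤ (1 + ‖x‖) ^ l := one_le_pow₀ (by linarith [norm_nonneg x])
          nlinarith
  · change gInt μ φ γ 0 (‖x‖ ^ 2) = _
    simp [gInt]

end general


section general2
open Complex Set
variable {μ : Measure ℝ} {φ γ : ℝ → ℂ}

lemma gauss_fourier {w : ℂ} (hw : 0 < w.im) (y : E8) :
    𝓕 (fun x : E8 => cexp (Real.pi * I * (‖x‖ : ℂ) ^ 2 * w)) y
      = (w ^ 4)⁻¹ * cexp (Real.pi * I * (‖y‖ : ℂ) ^ 2 * (-1 / w)) := by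
  have hw0 : w ≠ 0 := by rintro rfl; simp at hw
  have hb : 0 < (-(Real.pi * I * w)).re := by
    have : -(Real.pi * I * w) = (Real.pi : ℂ) * (-(I * w)) := by ring
    rw [this, Complex.re_ofReal_mul]; simp; positivity
  have := fourier_gaussian_innerProductSpace (V := E8) hb y
  have e : (fun x : E8 => cexp (Real.pi * I * (‖x‖ : ℂ) ^ 2 * w)) =
      (fun v : E8 => cexp (- -(Real.pi * I * w) * ‖v‖ ^ 2)) := by
    funext x; congr 1; ring
  rw [e, this]
  have hpi : (Real.pi : ℂ) ≠ 0 := by exact_mod_cast Real.pi_ne_zero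
  congr 1
  · rw [finrank_euclideanSpace, Fintype.card_fin]
    rw [show (((8:ℕ):ℂ) / 2) = ((4:ℕ):ℂ) by norm_num, Complex.cpow_natCast]
    have : (Real.pi : ℂ) / -(Real.pi * I * w) = I / w := by
      field_simp; simp
    rw [this, div_pow, I_pow_four, one_div]
  · congr 1
    field_simp
    simp

lemma gauss_norm_int {w : ℂ} (hw : 0 < w.im) :
    Integrable (fun x : E8 => Real.exp (-(Real.pi * ‖x‖ ^ 2 * w.im))) ∧
    ∫ x : E8, Real.exp (-(Real.pi * ‖x‖ ^ 2 * w.im)) = (w.im⁻¹) ^ 4 := by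
  have hb : 0 < Real.pi * w.im := by positivity
  have e : (fun x : E8 => Real.exp (-(Real.pi * ‖x‖ ^ 2 * w.im))) =
    fun x : E8 => Real.exp (-(Real.pi * w.im) * ‖x‖ ^ 2) := by funext x; congr 1; ring
  have h2 := GaussianFourier.integral_rexp_neg_mul_sq_norm (V := E8) hb
  have h3 : (Real.pi / (Real.pi * w.im)) ^ ((Module.finrank ℝ E8 : ℝ) / 2) = (w.im⁻¹) ^ 4 := by
    rw [finrank_euclideanSpace, Fintype.card_fin,
      show (((8:ℕ):ℝ) / 2) = ((4:ℕ):ℝ) by norm_num, Real.rpow_natCast]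
    congr 1; field_simp
  rw [h3] at h2
  rw [e]
  refine ⟨?_, h2⟩
  by_contra hc
  rw [integral_undef hc] at h2
  have : 0 < (w.im⁻¹) ^ 4 := by positivity
  linarith

lemma GData.fourier [SFinite μ] (h : GData μ φ γ) (y : E8) :
    𝓕 (fun x : E8 => ∫ t, φ t * cexp (Real.pi * I * (‖x‖ : ℂ) ^ 2 * γ t) ∂μ) y =
    ∫ t, φ t * ((γ t ^ 4)⁻¹ * cexp (Real.pi * I * (‖y‖ : ℂ) ^ 2 * (-1 / γ t))) ∂μ := by
  have hc := h.cγ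
  rw [Real.fourier_eq]
  have hnorm : ∀ (x : E8) (t : ℝ), ‖Real.fourierChar (-inner ℝ x y) •
      (φ t * cexp (Real.pi * I * (‖x‖ : ℂ) ^ 2 * γ t))‖ =
      ‖φ t‖ * Real.exp (-(Real.pi * ‖x‖ ^ 2 * (γ t).im)) := by
    intro x t
    rw [Circle.norm_smul, norm_mul]
    have := norm_gexp (‖x‖ ^ 2) (γ t)
    push_cast at this
    rw [this]
  have hint : Integrable (fun p : E8 × ℝ => Real.fourierChar (-inner ℝ p.1 y) •
      (φ p.2 * cexp (Real.pi * I * (‖p.1‖ : ℂ) ^ 2 * γ p.2))) (volume.prod μ) := by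
    have hm : AEStronglyMeasurable (fun p : E8 × ℝ => Real.fourierChar (-inner ℝ p.1 y) •
      (φ p.2 * cexp (Real.pi * I * (‖p.1‖ : ℂ) ^ 2 * γ p.2))) (volume.prod μ) := by
      refine AEStronglyMeasurable.smul (Continuous.aestronglyMeasurable ?_) ?_
      · exact continuous_subtype_val.comp (Real.continuous_fourierChar.comp (f := fun p : E8 × ℝ => -inner ℝ p.1 y) (by fun_prop))
      · refine (h.mφ.comp_snd).mul (Continuous.aestronglyMeasurable (by fun_prop))
    rw [integrable_prod_iff' hm]
    simp only [hnorm]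
    constructor
    · filter_upwards [h.pos] with t ht
      have := (gauss_norm_int ht).1.const_mul ‖φ t‖
      refine Integrable.mono' this ?_ (Filter.Eventually.of_forall fun x => (hnorm x t).le)
      refine AEStronglyMeasurable.smul (Continuous.aestronglyMeasurable ?_) ?_
      · exact continuous_subtype_val.comp (Real.continuous_fourierChar.comp (f := fun x : E8 => -inner ℝ x y) (by fun_prop))
      · exact (Continuous.aestronglyMeasurable (by fun_prop))
    · have hi := h.int 0 4
      refine hi.mono' ?_ ?_
      · have : AEStronglyMeasurable (fun t => ‖φ t‖ * (γ t).im⁻¹ ^ 4) μ := by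
          refine h.mφ.norm.mul ?_
          have : Measurable fun t => (γ t).im⁻¹ ^ 4 := by
            have : Measurable γ := hc.measurable
            fun_prop
          exact this.aestronglyMeasurable
        refine this.congr ?_
        filter_upwards [h.pos] with t ht
        rw [integral_const_mul, (gauss_norm_int ht).2]
      · filter_upwards [h.pos] with t ht
        rw [integral_const_mul, (gauss_norm_int ht).2]
        have one : 1 ≤ Real.exp (Real.pi / 2 * (γ t).im) := Real.one_le_exp (by positivity)
        rw [Real.norm_of_nonneg (by positivity), pow_zero, one_mul]
        gcongr
        exact le_mul_of_one_le_right (by positivity) one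
  have e1 : ∀ x : E8, Real.fourierChar (-inner ℝ x y) • ∫ t, φ t * cexp (Real.pi * I * (‖x‖ : ℂ) ^ 2 * γ t) ∂μ
     = ∫ t, Real.fourierChar (-inner ℝ x y) • (φ t * cexp (Real.pi * I * (‖x‖ : ℂ) ^ 2 * γ t)) ∂μ := by
    intro x; simp only [Circle.smul_def]; rw [integral_smul]
  simp only [e1]
  rw [integral_integral_swap hint]
  refine integral_congr_ae ?_
  filter_upwards [h.pos] with t ht
  rw [← gauss_fourier ht, Real.fourier_eq, ← integral_const_mul]
  congr 1
  funext x
  simp only [Circle.smul_def, smul_eq_mul]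
  ring

lemma schwartz_swap {S1 S2 : SchwartzMap E8 ℂ} (hev : ∀ x, S1 (-x) = S1 x)
    (h : ∀ x, 𝓕 (S1 : E8 → ℂ) x = - S2 x) : ∀ x, 𝓕 (S2 : E8 → ℂ) x = - S1 x := by
  intro x
  have e : 𝓕 S1 = - S2 := by
    ext x
    rw [SchwartzMap.fourier_coe]; simpa using h x
  have e2 : S2 = - 𝓕 S1 := by rw [e, neg_neg]
  have h3 : 𝓕⁻ ((𝓕 S1 : SchwartzMap E8 ℂ) : E8 → ℂ) (-x) = S1 (-x) := by
    rw [← SchwartzMap.fourierInv_coe, FourierTransform.fourierInv_fourier_eq]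
  rw [Real.fourierInv_eq_fourier_neg, neg_neg, hev, e] at h3
  rw [← h3, Real.fourier_eq, Real.fourier_eq, ← integral_neg]
  simp

end general2


section pieces
open Complex Set

lemma pow_exp_bd {t : ℝ} (ht : 0 < t) (M : ℕ) : (t⁻¹) ^ M * Real.exp (-t⁻¹) ≤ M.factorial := by
  have h := Real.pow_div_factorial_le_exp (t⁻¹) (by positivity) M
  rw [div_le_iff₀ (by positivity)] at h
  rw [Real.exp_neg, ← div_eq_mul_inv, div_le_iff₀ (Real.exp_pos _)]
  linarith

lemma gdata_seg {φ γ : ℝ → ℂ} (hφ : ContinuousOn φ (Ioc 0 1)) (hγ : Continuous γ)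
    (him : ∀ t, (γ t).im = t) (hn : ∀ t ∈ Ioc (0:ℝ) 1, ‖γ t‖ ≤ 2) {K : ℝ} (hK : 0 < K)
    (hb : ∀ t ∈ Ioc (0:ℝ) 1, ‖φ t‖ ≤ K * Real.exp (-t⁻¹)) :
    GData (volume.restrict (Ioc 0 1)) φ γ where
  mφ := hφ.aestronglyMeasurable measurableSet_Ioc
  cγ := hγ
  pos := by
    refine (ae_restrict_iff' measurableSet_Ioc).2 (Filter.Eventually.of_forall fun t ht => ?_)
    rw [him]; exact ht.1
  int := by
    intro i M
    simp only [him]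
    have hm : AEStronglyMeasurable (fun t => ‖φ t‖ * (‖γ t‖ ^ i * t⁻¹ ^ M * Real.exp (Real.pi / 2 * t)))
        (volume.restrict (Ioc 0 1)) := by
      refine (hφ.aestronglyMeasurable measurableSet_Ioc).norm.mul ?_
      have : Measurable γ := hγ.measurable
      exact Measurable.aestronglyMeasurable (by fun_prop)
    refine Integrable.of_bound (C := K * (2 ^ i * M.factorial * Real.exp (Real.pi / 2))) hm ?_
    refine (ae_restrict_iff' measurableSet_Ioc).2 (Filter.Eventually.of_forall fun t ht => ?_)
    have ht0 := ht.1
    rw [Real.norm_of_nonneg (by positivity)]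
    have h1 := pow_exp_bd ht.1 M
    have h2 : Real.exp (Real.pi / 2 * t) ≤ Real.exp (Real.pi / 2) :=
      Real.exp_le_exp.2 (by nlinarith [ht.2, Real.pi_pos])
    calc _ ≤ (K * Real.exp (-t⁻¹)) * (2 ^ i * t⁻¹ ^ M * Real.exp (Real.pi / 2)) := by
          gcongr
          · exact hb t ht
          · exact hn t ht
      _ = K * (2 ^ i * (t⁻¹ ^ M * Real.exp (-t⁻¹)) * Real.exp (Real.pi / 2)) := by ring
      _ ≤ _ := by gcongr

/-- the segment parametrisations -/
noncomputable def g1 (t : ℝ) : ℂ := -1 + t * (I - -1)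
noncomputable def g2 (t : ℝ) : ℂ := 1 + t * (I - 1)
noncomputable def g3 (t : ℝ) : ℂ := 0 + t * (I - 0)
noncomputable def g4 (t : ℝ) : ℂ := I * t

lemma g1_im (t : ℝ) : (g1 t).im = t := by simp [g1]
lemma g2_im (t : ℝ) : (g2 t).im = t := by simp [g2]
lemma g3_im (t : ℝ) : (g3 t).im = t := by simp [g3]
lemma g4_im (t : ℝ) : (g4 t).im = t := by simp [g4]
lemma g1_c : Continuous g1 := by unfold g1; fun_prop
lemma g2_c : Continuous g2 := by unfold g2; fun_prop
lemma g3_c : Continuous g3 := by unfold g3; fun_prop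
lemma g4_c : Continuous g4 := by unfold g4; fun_prop

lemma psi_cont {ψ : ℂ → ℂ} (h : ∀ z : ℂ, 0 < z.im → DifferentiableAt ℂ ψ z) {γ : ℝ → ℂ} (c : ℂ)
    (hγ : Continuous γ) (s : Set ℝ) (him : ∀ t ∈ s, 0 < (γ t).im) :
    ContinuousOn (fun t => c * ψ (γ t)) s := by
  intro t ht
  have : ContinuousAt (fun t => ψ (γ t)) t :=
    ContinuousAt.comp (g := ψ) (h _ (him t ht)).continuousAt hγ.continuousAt
  exact (continuousAt_const.mul this).continuousWithinAt

lemma exp_aux {a t : ℝ} (ht : 0 < t) (h : (2 * t)⁻¹ ≤ a) : Real.exp (-Real.pi * a) ≤ Real.exp (-t⁻¹) := by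
  refine Real.exp_le_exp.2 ?_
  have h1 : (2 * t)⁻¹ = t⁻¹ / 2 := by rw [mul_inv]; ring
  have : 0 < t⁻¹ := by positivity
  nlinarith [Real.pi_gt_three]

lemma g1_norm : ∀ t ∈ Ioc (0:ℝ) 1, ‖g1 t‖ ≤ 2 := by
  intro t ht
  have h : ‖g1 t‖ ^ 2 ≤ 2 ^ 2 := by
    rw [← normSq_eq_norm_sq, normSq_apply]
    simp [g1]; nlinarith [ht.1, ht.2]
  exact (pow_le_pow_iff_left₀ (norm_nonneg _) (by norm_num) (by norm_num)).1 h
lemma g2_norm : ∀ t ∈ Ioc (0:ℝ) 1, ‖g2 t‖ ≤ 2 := by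
  intro t ht
  have h : ‖g2 t‖ ^ 2 ≤ 2 ^ 2 := by
    rw [← normSq_eq_norm_sq, normSq_apply]
    simp [g2]; nlinarith [ht.1, ht.2]
  exact (pow_le_pow_iff_left₀ (norm_nonneg _) (by norm_num) (by norm_num)).1 h
lemma g3_norm : ∀ t ∈ Ioc (0:ℝ) 1, ‖g3 t‖ ≤ 2 := by
  intro t ht
  have h : ‖g3 t‖ ^ 2 ≤ 2 ^ 2 := by
    rw [← normSq_eq_norm_sq, normSq_apply]
    simp [g3]; nlinarith [ht.1, ht.2]
  exact (pow_le_pow_iff_left₀ (norm_nonneg _) (by norm_num) (by norm_num)).1 h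

lemma psiI_bd_seg {K : ℝ} (hK : 0 < K) (h : ∀ v : ℂ, 0 < v.im → normSq v ≤ 2 * v.im →
    ‖psiI v‖ ≤ K * Real.exp (-Real.pi * (v.im / normSq v))) {t : ℝ} (ht : t ∈ Ioc (0:ℝ) 1) {v : ℂ} (c : ℂ)
    (hv : v.im = t) (hv2 : normSq v ≤ 2 * t ^ 2) : ‖c * psiI v‖ ≤ (‖c‖ + 1) * K * Real.exp (-t⁻¹) := by
  have ht0 := ht.1
  have hn : 0 < normSq v := normSq_pos.2 (by rintro rfl; simp at hv; linarith)
  have h1 := h v (by rw [hv]; exact ht.1) (by rw [hv]; nlinarith [ht.2])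
  have h2 : (2 * t)⁻¹ ≤ v.im / normSq v := by
    rw [hv, le_div_iff₀ hn, inv_mul_le_iff₀ (by positivity)]
    linarith
  have h3 := exp_aux ht0 h2
  rw [norm_mul, mul_assoc]
  gcongr
  · linarith
  · exact h1.trans (by gcongr)

lemma gd1 : GData (volume.restrict (Ioc 0 1)) (fun t => (I - -1) * psiT (g1 t)) g1 := by
  obtain ⟨K, hK, h⟩ := psiI_bd
  refine gdata_seg (psi_cont (fun z hz => psiT_diff hz) _ g1_c _ (fun t ht => by rw [g1_im]; exact ht.1))
    g1_c g1_im g1_norm (K := (‖(I - -1)‖ + 1) * K) (by positivity) fun t ht => ?_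
  rw [← psiI_add_one]
  refine psiI_bd_seg hK h ht _ (by simp [g1]) ?_
  rw [normSq_apply]; simp [g1]; nlinarith

lemma gd2 : GData (volume.restrict (Ioc 0 1)) (fun t => (I - 1) * psiT (g2 t)) g2 := by
  obtain ⟨K, hK, h⟩ := psiI_bd
  refine gdata_seg (psi_cont (fun z hz => psiT_diff hz) _ g2_c _ (fun t ht => by rw [g2_im]; exact ht.1))
    g2_c g2_im g2_norm (K := (‖(I - 1)‖ + 1) * K) (by positivity) fun t ht => ?_
  have : psiT (g2 t) = psiI (g2 t - 1) := by rw [← psiT_add_one, sub_add_cancel]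
  rw [this]
  refine psiI_bd_seg hK h ht _ (by simp [g2]) ?_
  rw [normSq_apply]; simp [g2]; nlinarith

lemma gd3 : GData (volume.restrict (Ioc 0 1)) (fun t => (I - 0) * psiI (g3 t)) g3 := by
  obtain ⟨K, hK, h⟩ := psiI_bd
  refine gdata_seg (psi_cont (fun z hz => psiI_diff hz) _ g3_c _ (fun t ht => by rw [g3_im]; exact ht.1))
    g3_c g3_im g3_norm (K := (‖(I - 0)‖ + 1) * K) (by positivity) fun t ht => ?_
  refine psiI_bd_seg hK h ht _ (by simp [g3]) ?_
  rw [normSq_apply]; simp [g3]; nlinarith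

lemma gd4 : GData (volume.restrict (Ioi 1)) (fun t => I * psiS (g4 t)) g4 := by
  obtain ⟨K, hK, h⟩ := psiS_bd
  have hc : ContinuousOn (fun t => I * psiS (g4 t)) (Ioi 1) :=
    psi_cont (fun z hz => psiS_diff hz) _ g4_c _ (fun t ht => by rw [g4_im]; exact one_pos.trans ht)
  have hm := hc.aestronglyMeasurable (μ := volume) measurableSet_Ioi
  refine ⟨hm, g4_c, ?_, ?_⟩
  · refine (ae_restrict_iff' measurableSet_Ioi).2 (Filter.Eventually.of_forall fun t ht => ?_)
    rw [g4_im]; exact one_pos.trans ht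
  · intro i M
    have hint : Integrable (fun t : ℝ => K * (2 ^ i * i.factorial) * Real.exp (-(1/2) * t)) (volume.restrict (Ioi 1)) :=
      ((integrableOn_exp_mul_Ioi (by norm_num) 1)).const_mul _
    refine hint.mono' ?_ ?_
    · refine hm.norm.mul ?_
      have : Measurable g4 := g4_c.measurable
      exact Measurable.aestronglyMeasurable (by fun_prop)
    refine (ae_restrict_iff' measurableSet_Ioi).2 (Filter.Eventually.of_forall fun t ht => ?_)
    have ht1 : 1 < t := ht
    have ht0 : 0 < t := by linarith
    have hn : ‖g4 t‖ = t := by simp [g4, abs_of_pos ht0]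
    rw [g4_im, hn, Real.norm_of_nonneg (by positivity), norm_mul, norm_I, one_mul]
    have h1 := h (g4 t) (by rw [g4_im]; linarith)
    rw [g4_im] at h1
    have h2 : (t⁻¹) ^ M ≤ 1 := pow_le_one₀ (by positivity) (inv_le_one_of_one_le₀ ht1.le)
    have h3 : t ^ i ≤ 2 ^ i * i.factorial * Real.exp (t / 2) := by
      have := Real.pow_div_factorial_le_exp (t / 2) (by positivity) i
      rw [div_le_iff₀ (by positivity)] at this
      calc t ^ i = 2 ^ i * (t/2)^i := by rw [← mul_pow]; congr 1; ring
        _ ≤ 2 ^ i * (Real.exp (t / 2) * i.factorial) := by gcongr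
        _ = _ := by ring
    calc _ ≤ (K * Real.exp (-Real.pi * t)) * ((2 ^ i * i.factorial * Real.exp (t / 2)) * 1 * Real.exp (Real.pi / 2 * t)) := by gcongr
      _ = K * (2 ^ i * i.factorial) * (Real.exp (-Real.pi * t) * Real.exp (t / 2) * Real.exp (Real.pi / 2 * t)) := by ring
      _ ≤ _ := by
        rw [← Real.exp_add, ← Real.exp_add]
        gcongr
        nlinarith [Real.pi_gt_three]

lemma ft3 (r : ℂ) : ∫ t in Ioc (0:ℝ) 1, (I - 0) * psiI (g3 t) * ((g3 t ^ 4)⁻¹ * cexp (Real.pi * I * r ^ 2 * (-1 / g3 t)))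
    = - ∫ t in Ioi (1:ℝ), I * psiS (g4 t) * cexp (Real.pi * I * r ^ 2 * g4 t) := by
  have himg : Ioo (0:ℝ) 1 = (fun s : ℝ => s⁻¹) '' Ioi 1 := by
    ext x
    constructor
    · intro hx
      exact ⟨x⁻¹, (one_lt_inv₀ hx.1).2 hx.2, inv_inv x⟩
    · rintro ⟨s, hs, rfl⟩
      have hs' : (1:ℝ) < s := hs
      exact ⟨by positivity, inv_lt_one_of_one_lt₀ hs'⟩
  rw [integral_Ioc_eq_integral_Ioo, himg, integral_image_eq_integral_abs_deriv_smul measurableSet_Ioi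
    (f' := fun s => -(s^2)⁻¹) (fun s hs => (hasDerivAt_inv (by
      have : (1:ℝ) < s := hs
      positivity)).hasDerivWithinAt) (fun a _ b _ h => inv_injective h), ← integral_neg]
  refine setIntegral_congr_fun measurableSet_Ioi fun s hs => ?_
  have hs1 : (1:ℝ) < s := hs
  have hs0 : (s:ℂ) ≠ 0 := by exact_mod_cast (by positivity : s ≠ 0)
  have e1 : g3 s⁻¹ = -1 / g4 s := by
    simp only [g3, g4]; push_cast; field_simp; simp
  have hg : g4 s ≠ 0 := by simp [g4, hs0]
  have e2 : -1 / (-1 / g4 s) = g4 s := by field_simp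
  rw [e1, e2, ← psiI_S (g4 s) hg, abs_neg, abs_of_pos (by positivity), real_smul]
  have e3 : g4 s ^ 2 = - s ^ 2 := by simp [g4, mul_pow]
  have e4 : ((-1 / g4 s) ^ 4)⁻¹ = (s:ℂ) ^ 4 := by
    have : ((-1 / g4 s) ^ 4)⁻¹ = (g4 s ^ 2)^2 := by field_simp
    rw [this, e3]; ring
  rw [e3, e4]
  push_cast
  field_simp
  ring

end pieces


section contour
open Complex Set Filter Topology

lemma contour_int {F : ℂ → ℂ} {c : ℂ} {ρ M : ℝ} (hF : DifferentiableOn ℂ F (Metric.ball c ρ))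
    (hM : ∀ w ∈ Metric.ball c ρ, ‖F w‖ ≤ M) {α α' : ℝ → ℂ}
    (hα : ∀ t, HasDerivAt α (α' t) t) (hα' : Continuous α')
    (hm : ∀ t ∈ Ioo (0:ℝ) 1, α t ∈ Metric.ball c ρ) :
    IntegrableOn (fun t => F (α t) * α' t) (Ioo 0 1) := by
  have hc : Continuous α := continuous_iff_continuousAt.2 fun t => (hα t).continuousAt
  have hco : ContinuousOn (fun t => F (α t)) (Ioo 0 1) := hF.continuousOn.comp hc.continuousOn hm
  have h1 : IntegrableOn α' (Ioo 0 1) := hα'.integrableOn_Icc.mono_set Ioo_subset_Icc_self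
  refine Integrable.bdd_mul (c := M) h1 (hco.aestronglyMeasurable measurableSet_Ioo) ?_
  exact (ae_restrict_iff' measurableSet_Ioo).2 (Eventually.of_forall fun t ht => hM _ (hm t ht))

lemma contour_eq {F : ℂ → ℂ} {c : ℂ} {ρ M : ℝ} (hF : DifferentiableOn ℂ F (Metric.ball c ρ))
    (hM : ∀ w ∈ Metric.ball c ρ, ‖F w‖ ≤ M) {α β α' β' : ℝ → ℂ}
    (hα : ∀ t, HasDerivAt α (α' t) t) (hβ : ∀ t, HasDerivAt β (β' t) t)
    (hα' : Continuous α') (hβ' : Continuous β')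
    (hmα : ∀ t ∈ Ioo (0:ℝ) 1, α t ∈ Metric.ball c ρ)
    (hmβ : ∀ t ∈ Ioo (0:ℝ) 1, β t ∈ Metric.ball c ρ) (h0 : α 0 = β 0) (h1 : α 1 = β 1) :
    ∫ t in Ioc (0:ℝ) 1, F (α t) * α' t = ∫ t in Ioc (0:ℝ) 1, F (β t) * β' t := by
  obtain ⟨G, hG⟩ := hF.isExactOn_ball
  have ia := contour_int hF hM hα hα' hmα
  have ib := contour_int hF hM hβ hβ' hmβ
  have hcα : Continuous α := continuous_iff_continuousAt.2 fun t => (hα t).continuousAt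
  have hcβ : Continuous β := continuous_iff_continuousAt.2 fun t => (hβ t).continuousAt
  have hbd : ∀ t ∈ Ioo (0:ℝ) 1, ‖G (α t) - G (β t)‖ ≤ M * ‖α t - β t‖ := fun t ht =>
    Convex.norm_image_sub_le_of_norm_hasDerivWithin_le (fun x hx => (hG x hx).hasDerivWithinAt) hM
      (convex_ball c ρ) (hmβ t ht) (hmα t ht)
  have hlim : ∀ (s : ℝ) (l : Filter ℝ), l ≤ 𝓝 s → Ioo (0:ℝ) 1 ∈ l → α s = β s →
      Tendsto (fun t => G (α t) - G (β t)) l (𝓝 0) := by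
    intro s l hl hs hab
    refine squeeze_zero_norm' (a := fun t => M * ‖α t - β t‖) ?_ ?_
    · filter_upwards [hs] with t ht using hbd t ht
    · have : Continuous fun t => M * ‖α t - β t‖ := by fun_prop
      have h := (this.tendsto s).mono_left hl
      simpa [hab] using h
  have key := intervalIntegral.integral_eq_sub_of_hasDerivAt_of_tendsto (a := 0) (b := 1)
    (f := fun t => G (α t) - G (β t)) (f' := fun t => F (α t) * α' t - F (β t) * β' t) one_pos
    (fun t ht => ((hG _ (hmα t ht)).comp_of_eq t (hα t) rfl).sub
      ((hG _ (hmβ t ht)).comp_of_eq t (hβ t) rfl))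
    (by
      rw [intervalIntegrable_iff_integrableOn_Ioo_of_le zero_le_one]
      exact ia.sub ib)
    (hlim 0 _ nhdsWithin_le_nhds (Ioo_mem_nhdsGT one_pos) h0)
    (hlim 1 _ nhdsWithin_le_nhds (Ioo_mem_nhdsLT one_pos) h1)
  rw [intervalIntegral.integral_of_le zero_le_one, integral_Ioc_eq_integral_Ioo,
    integral_sub ia ib, sub_zero, sub_eq_zero] at key
  rw [integral_Ioc_eq_integral_Ioo, integral_Ioc_eq_integral_Ioo, key]

lemma g1_ne (t : ℝ) : g1 t ≠ 0 := by
  intro h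
  have h1 := congrArg re h
  have h2 := congrArg im h
  simp [g1] at h1 h2
  simp [h2] at h1

lemma mem_ball_iff' (w : ℂ) : w ∈ Metric.ball (1 + I) 1 ↔ normSq (w - 1) < 2 * (w - 1).im := by
  rw [Metric.mem_ball, dist_eq, ← sq_lt_one_iff₀ (norm_nonneg _), ← normSq_eq_norm_sq, normSq_apply,
    normSq_apply]
  simp
  constructor <;> intro h <;> nlinarith

lemma ft1 (r : ℝ) : ∫ t in Ioc (0:ℝ) 1, (I - -1) * psiT (g1 t) *
      ((g1 t ^ 4)⁻¹ * cexp (Real.pi * I * (r:ℂ) ^ 2 * (-1 / g1 t)))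
    = - ∫ t in Ioc (0:ℝ) 1, (I - 1) * psiT (g2 t) * cexp (Real.pi * I * (r:ℂ) ^ 2 * g2 t) := by
  obtain ⟨K, hK, hb⟩ := psiI_bd
  have him : ∀ w ∈ Metric.ball (1 + I) 1, 0 < w.im := by
    intro w hw
    have := (mem_ball_iff' w).1 hw
    have h2 := normSq_nonneg (w - 1)
    simp at this h2
    linarith
  have hd1 : ∀ t, HasDerivAt g1 (I - -1) t := by
    intro t
    have := ((hasDerivAt_id t).ofReal_comp.mul_const (I - -1)).const_add (-1)
    rw [ofReal_one, one_mul] at this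
    exact this
  have hd2 : ∀ t, HasDerivAt g2 (I - 1) t := by
    intro t
    have := ((hasDerivAt_id t).ofReal_comp.mul_const (I - 1)).const_add 1
    rw [ofReal_one, one_mul] at this
    exact this
  have hd : ∀ t, HasDerivAt (fun t => -1 / g1 t) ((I - -1) / g1 t ^ 2) t := by
    intro t
    have := ((hasDerivAt_const t (-1 : ℂ)).div (hd1 t) (g1_ne t))
    rw [zero_mul, zero_sub, neg_mul, one_mul, neg_neg] at this
    exact this
  have hI := I_sq
  have key := contour_eq (F := fun w => psiT w * cexp (Real.pi * I * (r:ℂ) ^ 2 * w)) (c := 1 + I) (ρ := 1)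
    (M := K) (α := fun t => -1 / g1 t) (α' := fun t => (I - -1) / g1 t ^ 2) (β := g2) (β' := fun _ => I - 1)
    (by
      intro w hw
      refine DifferentiableAt.differentiableWithinAt ?_
      have := psiT_diff (him w hw)
      fun_prop)
    (by
      intro w hw
      have h1 := (mem_ball_iff' w).1 hw
      have h0 := him w hw
      have hT : psiT w = psiI (w - 1) := by rw [← psiT_add_one, sub_add_cancel]
      have h2 := hb (w - 1) (by simpa using h0) h1.le
      have h3 := norm_gexp (r ^ 2) w
      push_cast at h3
      rw [norm_mul, h3, hT]
      have e1 : Real.exp (-Real.pi * ((w - 1).im / normSq (w - 1))) ≤ 1 := by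
        rw [Real.exp_le_one_iff]
        have : 0 ≤ (w - 1).im / normSq (w - 1) := div_nonneg (by simpa using h0.le) (normSq_nonneg _)
        nlinarith [Real.pi_pos]
      have e2 : Real.exp (-(Real.pi * r ^ 2 * w.im)) ≤ 1 := by
        rw [Real.exp_le_one_iff]
        have : 0 ≤ Real.pi * r ^ 2 * w.im := by positivity
        linarith
      calc _ ≤ (K * 1) * 1 := by
            gcongr
            exact h2.trans (by gcongr)
        _ = K := by ring)
    hd hd2
    (by
      have := g1_c
      exact continuous_const.div (by fun_prop) fun t => pow_ne_zero _ (g1_ne t))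
    continuous_const
    (by
      intro t ht
      beta_reduce
      rw [mem_ball_iff']
      have hn : 0 < normSq (g1 t) := normSq_pos.2 (g1_ne t)
      have e : -1 / g1 t - 1 = (-(t * (1 + I))) / g1 t := by
        field_simp [g1_ne t]
        simp only [g1]; ring
      have e2 : normSq (g1 t) = (t - 1) ^ 2 + t ^ 2 := by
        rw [normSq_apply]; simp [g1]; ring
      have e3 : ((-(t * (1 + I))) / g1 t).im = t / normSq (g1 t) := by
        rw [div_im]
        simp [g1]
        field_simp
        ring
      rw [e, e3, normSq_div]
      have e4 : normSq (-(t * (1 + I))) = 2 * t ^ 2 := by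
        rw [normSq_apply]; simp; ring
      rw [e4, ← mul_div_assoc]
      have := ht.1
      have := ht.2
      gcongr
      nlinarith)
    (by
      intro t ht
      rw [mem_ball_iff', normSq_apply]
      have := ht.1
      have := ht.2
      simp [g2]
      nlinarith)
    (by simp [g1, g2])
    (by simp [g1, g2])
  have e1 : ∫ t in Ioc (0:ℝ) 1, (I - 1) * psiT (g2 t) * cexp (Real.pi * I * (r:ℂ) ^ 2 * g2 t) =
      ∫ t in Ioc (0:ℝ) 1, psiT (g2 t) * cexp (Real.pi * I * (r:ℂ) ^ 2 * g2 t) * (I - 1) := by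
    congr 1; ext t; ring
  rw [e1, ← key, ← integral_neg]
  congr 1; ext t
  have h := psiT_S (g1 t) (g1_ne t)
  have h' : psiT (g1 t) = - (psiT (-1 / g1 t) * g1 t ^ 2) := by rw [h]; ring
  rw [h']
  have := g1_ne t
  field_simp

lemma bFn_schwartz_and_fourier_aux :
    ∃ S : SchwartzMap E8 ℂ, (∀ x, S x = bFn x) ∧ ∀ x, 𝓕 (S : E8 → ℂ) x = - S x := by
  obtain ⟨S1, h1⟩ := gd1.schwartz
  obtain ⟨S2, h2⟩ := gd2.schwartz
  obtain ⟨S3, h3⟩ := gd3.schwartz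
  obtain ⟨S4, h4⟩ := gd4.schwartz
  have f1 : ∀ x, 𝓕 (S1 : E8 → ℂ) x = - S2 x := by
    intro x
    rw [show (S1 : E8 → ℂ) = _ from funext h1, gd1.fourier, h2]
    exact ft1 ‖x‖
  have f3 : ∀ x, 𝓕 (S3 : E8 → ℂ) x = - S4 x := by
    intro x
    rw [show (S3 : E8 → ℂ) = _ from funext h3, gd3.fourier, h4]
    exact ft3 ‖x‖
  have f2 := schwartz_swap (fun x => by rw [h1, h1, norm_neg]) f1
  have f4 := schwartz_swap (fun x => by rw [h3, h3, norm_neg]) f3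
  refine ⟨S1 + S2 - (2:ℂ) • S3 - (2:ℂ) • S4, ?_, ?_⟩
  · intro x
    simp only [SchwartzMap.sub_apply, SchwartzMap.add_apply, SchwartzMap.smul_apply, h1, h2, h3, h4,
      bFn, bRad, segInt, rayIntFrom, intervalIntegral.integral_of_le zero_le_one, smul_eq_mul, mul_assoc,
      integral_const_mul, g1, g2, g3, g4]
  · intro x
    rw [← SchwartzMap.fourier_coe]
    have e : 𝓕 (S1 + S2 - (2:ℂ) • S3 - (2:ℂ) • S4) = 𝓕 S1 + 𝓕 S2 - (2:ℂ) • 𝓕 S3 - (2:ℂ) • 𝓕 S4 := by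
      simp only [← SchwartzMap.fourierTransformCLM_apply (𝕜 := ℂ), map_sub, map_add, map_smul]
    rw [e]
    simp only [SchwartzMap.sub_apply, SchwartzMap.add_apply, SchwartzMap.smul_apply,
      SchwartzMap.fourier_coe, f1, f2, f3, f4, smul_eq_mul]
    ring

end contour

/-- **Proposition 5.** The function `b : ℝ⁸ → ℂ` defined by the contour integrals above is a
Schwartz function and is a `−1`-eigenfunction of the Fourier transform: `b̂ = −b`. -/
theorem bFn_schwartz_and_fourier_eigenfunction :
    (∃ S : SchwartzMap (EuclideanSpace ℝ (Fin 8)) ℂ, ∀ x, S x = bFn x) ∧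
    (∀ x : EuclideanSpace ℝ (Fin 8), 𝓕 bFn x = -bFn x) := by
  obtain ⟨S, h1, h2⟩ := bFn_schwartz_and_fourier_aux
  refine ⟨⟨S, h1⟩, fun x => ?_⟩
  rw [← h1 x, ← h2 x, show (S : E8 → ℂ) = bFn from funext h1]
end

section
/- The function A(t) = −t² φ0(i/t) − (36/π²) ψ_I(it) satisfies A(t) < 0 for every real t ∈ (0, ∞). (Here φ0(i/t) and ψ_I(it) are real, so A is real-valued.) -/
open MeasureTheory

/-- Weight 2 Eisenstein series (quasimodular), via its `q`-expansion. -/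
noncomputable def E2 (z : ℂ) : ℂ :=
  1 - 24 * ∑' n : ℕ+, ((ArithmeticFunction.sigma 1 n : ℕ) : ℂ) *
    Complex.exp (2 * (Real.pi : ℂ) * Complex.I * n * z)

/-- Weight 4 Eisenstein series, via its `q`-expansion. -/
noncomputable def E4 (z : ℂ) : ℂ :=
  1 + 240 * ∑' n : ℕ+, ((ArithmeticFunction.sigma 3 n : ℕ) : ℂ) *
    Complex.exp (2 * (Real.pi : ℂ) * Complex.I * n * z)

/-- Weight 6 Eisenstein series, via its `q`-expansion. -/
noncomputable def E6 (z : ℂ) : ℂ :=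
  1 - 504 * ∑' n : ℕ+, ((ArithmeticFunction.sigma 5 n : ℕ) : ℂ) *
    Complex.exp (2 * (Real.pi : ℂ) * Complex.I * n * z)

/-- The elliptic `j`-invariant. -/
noncomputable def jInv (z : ℂ) : ℂ := 1728 * E4 z ^ 3 / (E4 z ^ 3 - E6 z ^ 2)

/-- The weakly holomorphic modular form `varphi_{-2}`. -/
noncomputable def varphim2 (z : ℂ) : ℂ := -1728 * E4 z * E6 z / (E4 z ^ 3 - E6 z ^ 2)

/-- The weakly holomorphic modular form `varphi_{-4}`. -/
noncomputable def varphim4 (z : ℂ) : ℂ := 1728 * E4 z ^ 2 / (E4 z ^ 3 - E6 z ^ 2)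

/-- `φ_{-4} = varphi_{-4}`. -/
noncomputable def phim4 (z : ℂ) : ℂ := varphim4 z

/-- `φ_{-2} = varphi_{-4}·E2 + varphi_{-2}`. -/
noncomputable def phim2 (z : ℂ) : ℂ := varphim4 z * E2 z + varphim2 z

/-- `φ_0 = varphi_{-4}·E2² + 2·varphi_{-2}·E2 + j − 1728`. -/
noncomputable def phi0 (z : ℂ) : ℂ :=
  varphim4 z * E2 z ^ 2 + 2 * varphim2 z * E2 z + jInv z - 1728
/-- `A(t) = −t²φ₀(i/t) − (36/π²)ψ_I(it)`. -/
noncomputable def Afn (t : ℝ) : ℂ :=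
  -(t : ℂ) ^ 2 * phi0 (Complex.I / (t : ℂ)) - (36 / (Real.pi : ℂ) ^ 2) * psiI (Complex.I * (t : ℂ))

lemma aux_exp (n : ℕ+) (y : ℝ) : Complex.exp (2 * (Real.pi : ℂ) * Complex.I * n * (Complex.I * y))
    = ((Real.exp (-2 * Real.pi * n * y) : ℝ) : ℂ) := by
  push_cast
  congr 1
  linear_combination (2 * (Real.pi : ℂ) * n * y) * Complex.I_mul_I

lemma E2_real (y : ℝ) : ∃ r : ℝ, E2 (Complex.I * y) = r := by
  refine ⟨1 - 24 * ∑' n : ℕ+, ((ArithmeticFunction.sigma 1 n : ℕ) : ℝ) *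
    Real.exp (-2 * Real.pi * n * y), ?_⟩
  simp only [E2, aux_exp]
  push_cast
  rfl

lemma E4_real (y : ℝ) : ∃ r : ℝ, E4 (Complex.I * y) = r := by
  refine ⟨1 + 240 * ∑' n : ℕ+, ((ArithmeticFunction.sigma 3 n : ℕ) : ℝ) *
    Real.exp (-2 * Real.pi * n * y), ?_⟩
  simp only [E4, aux_exp]
  push_cast
  rfl

lemma E6_real (y : ℝ) : ∃ r : ℝ, E6 (Complex.I * y) = r := by
  refine ⟨1 - 504 * ∑' n : ℕ+, ((ArithmeticFunction.sigma 5 n : ℕ) : ℝ) *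
    Real.exp (-2 * Real.pi * n * y), ?_⟩
  simp only [E6, aux_exp]
  push_cast
  rfl

lemma E4_eq (z : UpperHalfPlane) : E4 z = ModularForm.E₄ z := by
  rw [ModularForm.E₄, EisensteinSeries.q_expansion_bernoulli (by norm_num) (by decide) z]
  have : bernoulli 4 = -1/30 := by simp [bernoulli, bernoulli'_four]; norm_num
  rw [this, E4]
  simp only [zpow_natCast, ← Complex.exp_nat_mul]
  norm_num
  refine tsum_congr fun n => ?_
  congr 2
  ring

lemma E6_eq (z : UpperHalfPlane) : E6 z = ModularForm.E₆ z := by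
  rw [ModularForm.E₆, EisensteinSeries.q_expansion_bernoulli (by norm_num) (by decide) z]
  have : bernoulli 6 = 1/42 := by
    rw [bernoulli_eq_bernoulli'_of_ne_one (by norm_num), bernoulli'_def]
    norm_num [Finset.sum_range_succ, Nat.choose, bernoulli'_eq_zero_of_odd (n := 5) (by decide)]
  rw [this, E6]
  simp only [zpow_natCast, ← Complex.exp_nat_mul]
  norm_num
  refine tsum_congr fun n => ?_
  congr 2
  ring

lemma eta_real (y : ℝ) : ∃ r : ℝ, ModularForm.eta (Complex.I * y) = r := by
  refine ⟨Real.exp (-2 * Real.pi * y / 24) *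
    ∏' n : ℕ, (1 - Real.exp (-2 * Real.pi * (n+1) * y)), ?_⟩
  have h : ∀ n : ℕ, ModularForm.eta_q n (Complex.I * y)
      = ((Real.exp (-2 * Real.pi * (n+1) * y) : ℝ) : ℂ) := by
    intro n
    rw [ModularForm.eta_q_eq_cexp]
    push_cast
    congr 1
    linear_combination (2 * (Real.pi : ℂ) * (n+1) * y) * Complex.I_mul_I
  simp only [ModularForm.eta, h, Function.Periodic.qParam]
  rw [Complex.ofReal_mul]
  congr 1
  · push_cast
    congr 1
    linear_combination (2 * (Real.pi : ℂ) * y / 24) * Complex.I_mul_I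
  · have := Function.LeftInverse.map_tprod (L := SummationFilter.unconditional ℕ) (g := Complex.ofRealHom) (g' := Complex.reCLM)
      (fun n : ℕ => (1 - Real.exp (-2 * Real.pi * (n+1) * y)))
      Complex.continuous_ofReal Complex.continuous_re (fun x => by simp)
    simpa using this.symm

lemma disc_nonneg (y : ℝ) (hy : 0 < y) (a b : ℝ) (ha : E4 (Complex.I * y) = a)
    (hb : E6 (Complex.I * y) = b) : 0 < a ^ 3 - b ^ 2 := by
  obtain ⟨r, hr⟩ := eta_real y
  let z : UpperHalfPlane := ⟨Complex.I * y, by simpa using hy⟩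
  have h := ModularForm.discriminant_eq_E₄_cube_sub_E₆_sq z
  rw [← E4_eq, ← E6_eq, ModularForm.discriminant] at h
  change ModularForm.eta (Complex.I * y) ^ 24 = (E4 (Complex.I * y) ^ 3 - E6 (Complex.I * y) ^ 2) / 1728 at h
  rw [hr, ha, hb] at h
  have h2 : r ^ 24 = (a ^ 3 - b ^ 2) / 1728 := by exact_mod_cast h
  have hr0 : r ≠ 0 := by
    intro h0
    exact ModularForm.eta_ne_zero (z := Complex.I * y) z.2 (by rw [hr, h0, Complex.ofReal_zero])
  have : 0 < r ^ 24 := by positivity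
  linarith

lemma phi0_real (y : ℝ) (hy : 0 < y) : ∃ r : ℝ, 0 ≤ r ∧ phi0 (Complex.I * y) = r := by
  obtain ⟨a, ha⟩ := E4_real y
  obtain ⟨b, hb⟩ := E6_real y
  obtain ⟨c, hc⟩ := E2_real y
  have h := disc_nonneg y hy a b ha hb
  refine ⟨1728 * (c * a - b) ^ 2 / (a ^ 3 - b ^ 2), by positivity, ?_⟩
  have h' : (a : ℂ) ^ 3 - (b : ℂ) ^ 2 ≠ 0 := by exact_mod_cast h.ne'
  simp only [phi0, varphim4, varphim2, jInv, ha, hb, hc]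
  push_cast
  field_simp
  ring

lemma summable_gauss (y : ℝ) (hy : 0 < y) :
    Summable (fun n : ℤ => Real.exp (-Real.pi * y * (n : ℝ) ^ 2)) := by
  have h := (summable_jacobiTheta₂_term_iff 0 (Complex.I * y)).2 (by simpa using hy)
  refine h.norm.congr fun n => ?_
  rw [norm_jacobiTheta₂_term]
  simp
  ring_nf

lemma summable_gauss_half (y : ℝ) (hy : 0 < y) :
    Summable (fun n : ℤ => Real.exp (-Real.pi * y * ((n : ℝ) + 1 / 2) ^ 2)) := by
  have h := (summable_jacobiTheta₂_term_iff (Complex.I * y / 2) (Complex.I * y)).2 (by simpa using hy)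
  refine (h.norm.mul_left (Real.exp (-Real.pi * y / 4))).congr fun n => ?_
  rw [norm_jacobiTheta₂_term, ← Real.exp_add]
  simp
  ring_nf

lemma negone_exp (n : ℤ) : Complex.exp (Real.pi * Complex.I * n) = (-1 : ℂ) ^ n := by
  rw [mul_comm, Complex.exp_int_mul, Complex.exp_pi_mul_I]

lemma theta_real (t : ℝ) (ht : 0 < t) : ∃ a b c : ℝ, 0 < c ∧ c < a ∧
    theta00 (Complex.I * t) = a ∧ theta01 (Complex.I * t) = b ∧ theta10 (Complex.I * t) = c := by
  have e0 : ∀ n : ℤ, Complex.exp ((Real.pi : ℂ) * Complex.I * (n : ℂ) ^ 2 * (Complex.I * t)) =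
      ((Real.exp (-Real.pi * t * (n : ℝ) ^ 2) : ℝ) : ℂ) := by
    intro n
    push_cast
    congr 1
    linear_combination ((Real.pi : ℂ) * n ^ 2 * t) * Complex.I_mul_I
  have e1 : ∀ n : ℤ, Complex.exp ((Real.pi : ℂ) * Complex.I * ((n : ℂ) + 1 / 2) ^ 2 *
      (Complex.I * t)) = ((Real.exp (-Real.pi * t * ((n : ℝ) + 1 / 2) ^ 2) : ℝ) : ℂ) := by
    intro n
    push_cast
    congr 1
    linear_combination ((Real.pi : ℂ) * (n + 1 / 2) ^ 2 * t) * Complex.I_mul_I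
  have h0 : theta00 (Complex.I * t) =
      ((∑' n : ℤ, Real.exp (-Real.pi * t * (n : ℝ) ^ 2) : ℝ) : ℂ) := by
    simp only [theta00, e0]
    exact (Complex.ofReal_tsum _).symm
  have h1 : theta01 (Complex.I * t) =
      ((∑' n : ℤ, (-1 : ℝ) ^ n * Real.exp (-Real.pi * t * (n : ℝ) ^ 2) : ℝ) : ℂ) := by
    simp only [theta01, e0]
    rw [Complex.ofReal_tsum]
    refine tsum_congr fun n => ?_
    push_cast
    rfl
  have h2 : theta10 (Complex.I * t) =
      ((∑' n : ℤ, Real.exp (-Real.pi * t * ((n : ℝ) + 1 / 2) ^ 2) : ℝ) : ℂ) := by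
    simp only [theta10, e1]
    exact (Complex.ofReal_tsum _).symm
  refine ⟨_, _, _, ?_, ?_, h0, h1, h2⟩
  · exact (summable_gauss_half t ht).tsum_pos (fun _ => (Real.exp_pos _).le) 0 (Real.exp_pos _)
  set T0 := ∑' n : ℤ, Real.exp (-Real.pi * t * (n : ℝ) ^ 2) with hT0
  set T1 := ∑' n : ℤ, Real.exp (-Real.pi * t * ((n : ℝ) + 1 / 2) ^ 2) with hT1
  have hu : 0 < 1 / t := by positivity
  have hsum := summable_gauss (1 / t) hu
  set S0 := ∑' n : ℤ, Real.exp (-Real.pi * (1 / t) * (n : ℝ) ^ 2) with hS0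
  set S1 := ∑' n : ℤ, (-1 : ℝ) ^ n * Real.exp (-Real.pi * (1 / t) * (n : ℝ) ^ 2) with hS1
  have hle : ∀ n : ℤ, (-1 : ℝ) ^ n ≤ 1 := by
    intro n
    rcases Int.even_or_odd n with h | h
    · rw [h.neg_one_zpow]
    · rw [h.neg_one_zpow]; norm_num
  have hS : S1 < S0 := by
    refine Summable.tsum_lt_tsum (i := 1) (fun n => ?_) ?_ ?_ hsum
    · have := Real.exp_pos (-Real.pi * (1 / t) * (n : ℝ) ^ 2)
      nlinarith [hle n]
    · have := Real.exp_pos (-Real.pi * (1 / t) * ((1 : ℤ) : ℝ) ^ 2)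
      rw [zpow_one]
      linarith
    · refine Summable.of_norm_bounded hsum fun n => ?_
      rw [norm_mul, norm_zpow]
      simp
  set c : ℝ := 1 / (1 / t) ^ (1 / 2 : ℝ) with hc
  have hcpos : 0 < c := by positivity
  have hcc : (1 : ℂ) / (((1 / t : ℝ) : ℂ)) ^ (1 / 2 : ℂ) = (c : ℂ) := by
    have h3 := Complex.ofReal_cpow hu.le (1 / 2)
    rw [hc, Complex.ofReal_div 1 ((1 / t) ^ (1 / 2 : ℝ)), h3, Complex.ofReal_div 1 2,
      Complex.ofReal_one, Complex.ofReal_ofNat]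
  have hA : S0 = c * T0 := by
    have := Real.tsum_exp_neg_mul_int_sq hu
    rw [hS0, this, ← hc, hT0]
    congr 1
    refine tsum_congr fun n => ?_
    congr 1
    field_simp
  have hB : S1 = c * T1 := by
    have h := Complex.tsum_exp_neg_quadratic (a := ((1 / t : ℝ) : ℂ)) (by rwa [Complex.ofReal_re])
      (Complex.I / 2)
    rw [hcc, ← (Equiv.addRight (1 : ℤ)).tsum_eq
      (fun n : ℤ => Complex.exp (-Real.pi / ((1 / t : ℝ) : ℂ) *
        ((n : ℂ) + Complex.I * (Complex.I / 2)) ^ 2))] at h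
    have ht' : (t : ℂ) ≠ 0 := by exact_mod_cast ht.ne'
    have hL : ∀ n : ℤ, Complex.exp (-Real.pi * ((1 / t : ℝ) : ℂ) * (n : ℂ) ^ 2 +
        2 * Real.pi * (Complex.I / 2) * n) =
        (((-1 : ℝ) ^ n * Real.exp (-Real.pi * (1 / t) * (n : ℝ) ^ 2) : ℝ) : ℂ) := by
      intro n
      rw [Complex.exp_add, show 2 * (Real.pi : ℂ) * (Complex.I / 2) * n = Real.pi * Complex.I * n by ring,
        negone_exp]
      push_cast
      ring
    have hR : ∀ n : ℤ, Complex.exp (-Real.pi / ((1 / t : ℝ) : ℂ) *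
        ((((Equiv.addRight (1 : ℤ)) n : ℤ) : ℂ) + Complex.I * (Complex.I / 2)) ^ 2) =
        ((Real.exp (-Real.pi * t * ((n : ℝ) + 1 / 2) ^ 2) : ℝ) : ℂ) := by
      intro n
      have : Complex.I * (Complex.I / 2) = -1 / 2 := by
        linear_combination Complex.I_mul_I / 2
      rw [this, Equiv.coe_addRight]
      push_cast
      congr 1
      field_simp
      ring
    simp only [hL, hR] at h
    rw [← Complex.ofReal_tsum, ← Complex.ofReal_tsum] at h
    exact Complex.ofReal_injective (by rw [Complex.ofReal_mul]; exact h)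
  rw [hA, hB] at hS
  exact lt_of_mul_lt_mul_left hS hcpos.le

lemma psiI_real (t : ℝ) (ht : 0 < t) : ∃ r : ℝ, 0 < r ∧ psiI (Complex.I * t) = r := by
  obtain ⟨a, b, c, hc, hac, h0, h1, h2⟩ := theta_real t ht
  refine ⟨128 * (a ^ 4 + b ^ 4) / c ^ 8 + 128 * (b ^ 4 - c ^ 4) / a ^ 8, ?_, ?_⟩
  · have ha : 0 < a := hc.trans hac
    have h4 : c ^ 4 < a ^ 4 := by gcongr
    have h12 : (c ^ 4) ^ 3 < (a ^ 4) ^ 3 := by gcongr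
    rw [div_add_div _ _ (by positivity) (by positivity)]
    apply div_pos _ (by positivity)
    have : 0 ≤ b ^ 4 * (a ^ 8 + c ^ 8) := by positivity
    nlinarith
  · simp only [psiI, h0, h1, h2]
    push_cast
    rfl

/-- The function `A(t) = −t²φ₀(i/t) − (36/π²)ψ_I(it)` is real-valued and satisfies `A(t) < 0`
for every `t ∈ (0, ∞)`. -/
theorem Afn_neg (t : ℝ) (ht : 0 < t) : (Afn t).im = 0 ∧ (Afn t).re < 0 := by
  obtain ⟨r, hr, hr'⟩ := phi0_real (1 / t) (by positivity)
  obtain ⟨s, hs, hs'⟩ := psiI_real t ht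
  have h : Afn t = ((-t ^ 2 * r - 36 / Real.pi ^ 2 * s : ℝ) : ℂ) := by
    have e : Complex.I / (t : ℂ) = Complex.I * ((1 / t : ℝ) : ℂ) := by push_cast; ring
    rw [Afn, e, hr', hs']
    push_cast
    ring
  rw [h]
  refine ⟨Complex.ofReal_im _, ?_⟩
  rw [Complex.ofReal_re]
  have h1 : 0 ≤ t ^ 2 * r := by positivity
  have h2 : 0 < 36 / Real.pi ^ 2 * s := by positivity
  linarith
end
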